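/- Let n ≥ 1 be a natural number and let Ω ⊆ ℝⁿ be a nonempty bounded open convex set. For every real γ ≥ 1 and every ε > 0 there exists a constant M > 0 such that for every continuously differentiable function v : ℝⁿ → ℝ one has ∫_Ω v(x)² dx ≤ ε ∫_Ω ‖∇v(x)‖² dx + M (∫_Ω |v(x)|^{2/γ} dx)^γ. -/

import Mathlib

open MeasureTheory

section helpers

variable {n : ℕ}


lemma aux_integrableOn {X : Type*} [PseudoMetricSpace X] [ProperSpace X] [MeasurableSpace X]
    [OpensMeasurableSpace X] (μ : Measure X) [IsFiniteMeasureOnCompacts μ] {S : Set X}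
    (hS : Bornology.IsBounded S) {f : X → ℝ} (hf : Continuous f) : IntegrableOn f S μ :=
  (hf.continuousOn.integrableOn_compact' hS.isCompact_closure
    isClosed_closure.measurableSet).mono_set subset_closure

/-- change of variables -/
lemma aux_cv {Ω : Set (EuclideanSpace ℝ (Fin n))} (hbd : Bornology.IsBounded Ω) (hop : IsOpen Ω)
    {f : EuclideanSpace ℝ (Fin n) → ℝ} (hf : Continuous f) (h0 : ∀ x, 0 ≤ f x) {a : ℝ} (ha : 0 < a)
    (w : EuclideanSpace ℝ (Fin n)) (hmap : ∀ x ∈ Ω, a • x + w ∈ Ω) :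
    ∫ x in Ω, f (a • x + w) ≤ (a ^ n)⁻¹ * ∫ x in Ω, f x := by
  have hi : Integrable (Ω.indicator f) :=
    (aux_integrableOn volume hbd hf).integrable_indicator hop.measurableSet
  have hi2 : Integrable (fun x => Ω.indicator f (a • x + w)) :=
    (integrable_comp_smul_iff volume (fun x => Ω.indicator f (x + w)) ha.ne').2
      (hi.comp_add_right w)
  have hnn : ∀ x, 0 ≤ Ω.indicator f x := fun x => Set.indicator_nonneg (fun x _ => h0 x) x
  calc ∫ x in Ω, f (a • x + w) = ∫ x in Ω, Ω.indicator f (a • x + w) := by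
        refine setIntegral_congr_fun hop.measurableSet fun x hx => ?_
        simp [Set.indicator_of_mem (hmap x hx)]
    _ ≤ ∫ x, Ω.indicator f (a • x + w) :=
        setIntegral_le_integral hi2 (Filter.Eventually.of_forall fun x => hnn _)
    _ = (a ^ n)⁻¹ * ∫ x, Ω.indicator f (x + w) := by
        rw [Measure.integral_comp_smul volume (fun x => Ω.indicator f (x + w)) a]
        simp [abs_of_pos ha]
    _ = (a ^ n)⁻¹ * ∫ x in Ω, f x := by
        rw [integral_add_right_eq_self (Ω.indicator f) w, integral_indicator hop.measurableSet]

lemma aux_swap {X Y : Type*} [PseudoMetricSpace X] [ProperSpace X] [MeasurableSpace X]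
    [BorelSpace X] [PseudoMetricSpace Y] [ProperSpace Y] [MeasurableSpace Y]
    [BorelSpace Y] (μ : Measure X) (ν : Measure Y) [IsFiniteMeasureOnCompacts μ]
    [IsFiniteMeasureOnCompacts ν] [SFinite μ] [SFinite ν] [SecondCountableTopology X]
    [SecondCountableTopology Y]
    {S : Set X} {T : Set Y} (hS : Bornology.IsBounded S) (hT : Bornology.IsBounded T)
    {f : X → Y → ℝ} (hf : Continuous (Function.uncurry f)) :
    Integrable (Function.uncurry f) ((μ.restrict S).prod (ν.restrict T)) := by
  have hb : Bornology.IsBounded (S ×ˢ T) := hS.prod hT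
  rw [Measure.prod_restrict]
  have h1 : IsFiniteMeasure (μ.restrict (closure S)) :=
    ⟨by simpa using hS.isCompact_closure.measure_lt_top⟩
  have h2 : IsFiniteMeasure (ν.restrict (closure T)) :=
    ⟨by simpa using hT.isCompact_closure.measure_lt_top⟩
  have hc : IsCompact (closure S ×ˢ closure T) := hS.isCompact_closure.prod hT.isCompact_closure
  refine IntegrableOn.mono_set (t := closure S ×ˢ closure T) ?_
    (Set.prod_mono subset_closure subset_closure)
  obtain ⟨C, hC⟩ := hc.exists_bound_of_continuousOn hf.continuousOn
  refine IntegrableOn.of_bound ?_ hf.aestronglyMeasurable C ?_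
  · rw [Measure.prod_prod]
    exact ENNReal.mul_lt_top hS.isCompact_closure.measure_lt_top hT.isCompact_closure.measure_lt_top
  · refine (ae_restrict_iff' ?_).2 (Filter.Eventually.of_forall hC)
    exact (isClosed_closure.measurableSet).prod isClosed_closure.measurableSet

lemma aux_sq {f : ℝ → ℝ} (hf : Continuous f) :
    (∫ s in (0:ℝ)..1, f s) ^ 2 ≤ ∫ s in (0:ℝ)..1, f s ^ 2 := by
  set c := ∫ s in (0:ℝ)..1, f s with hc
  have h : ∫ s in (0:ℝ)..1, (2 * c * f s - c ^ 2) ≤ ∫ s in (0:ℝ)..1, f s ^ 2 := by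
    apply intervalIntegral.integral_mono_on zero_le_one
    · exact Continuous.intervalIntegrable (by fun_prop) _ _
    · exact Continuous.intervalIntegrable (by fun_prop) _ _
    · intro s _
      nlinarith [sq_nonneg (f s - c)]
  rw [intervalIntegral.integral_sub (Continuous.intervalIntegrable (by fun_prop) _ _)
    (Continuous.intervalIntegrable (by fun_prop) _ _), intervalIntegral.integral_const_mul,
    ← hc] at h
  simp at h
  nlinarith

lemma aux_diff {v : EuclideanSpace ℝ (Fin n) → ℝ} (hv : ContDiff ℝ 1 v) {D t : ℝ} (x y : EuclideanSpace ℝ (Fin n)) (hD : ‖y - x‖ ≤ D) :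
    (v (x + t • (y - x)) - v x) ^ 2 ≤
      t ^ 2 * D ^ 2 * ∫ s in (0:ℝ)..1, ‖fderiv ℝ v (x + (s * t) • (y - x))‖ ^ 2 := by
  have hfd : Continuous (fderiv ℝ v) := hv.continuous_fderiv one_ne_zero
  have hcont : Continuous fun s : ℝ => fderiv ℝ v (x + (s * t) • (y - x)) (t • (y - x)) := by
    exact (hfd.comp (by fun_prop)).clm_apply continuous_const
  have hcont2 : Continuous fun s : ℝ => ‖fderiv ℝ v (x + (s * t) • (y - x))‖ ^ 2 :=
    ((hfd.comp (by fun_prop)).norm).pow 2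
  have hder : ∀ s : ℝ, HasDerivAt (fun s : ℝ => v (x + (s * t) • (y - x)))
      (fderiv ℝ v (x + (s * t) • (y - x)) (t • (y - x))) s := by
    intro s
    have h1 : HasDerivAt (fun s : ℝ => x + (s * t) • (y - x)) (t • (y - x)) s := by
      have := (((hasDerivAt_id s).mul_const t).smul_const (y - x)).const_add x
      simpa using this
    exact ((hv.differentiable one_ne_zero) _).hasFDerivAt.comp_hasDerivAt s h1
  have hftc := intervalIntegral.integral_eq_sub_of_hasDerivAt (a := 0) (b := 1)
    (fun s _ => hder s) (hcont.intervalIntegrable _ _)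
  simp only [one_mul, zero_mul, zero_smul, add_zero] at hftc
  rw [← hftc]
  refine (aux_sq hcont).trans ?_
  rw [← intervalIntegral.integral_const_mul]
  apply intervalIntegral.integral_mono_on zero_le_one
  · exact Continuous.intervalIntegrable (by fun_prop) _ _
  · exact Continuous.intervalIntegrable (by fun_prop) _ _
  · intro s _
    have h1 := (fderiv ℝ v (x + (s * t) • (y - x))).le_opNorm (t • (y - x))
    rw [norm_smul, Real.norm_eq_abs, Real.norm_eq_abs] at h1
    have h2 : |fderiv ℝ v (x + (s * t) • (y - x)) (t • (y - x))| ≤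
        ‖fderiv ℝ v (x + (s * t) • (y - x))‖ * (|t| * D) := h1.trans (by gcongr)
    rw [← sq_abs]
    calc _ ≤ (‖fderiv ℝ v (x + (s * t) • (y - x))‖ * (|t| * D)) ^ 2 := by gcongr
      _ = _ := by rw [mul_pow, mul_pow, sq_abs]; ring

lemma aux_b {Ω : Set (EuclideanSpace ℝ (Fin n))} (hbd : Bornology.IsBounded Ω) (hop : IsOpen Ω)
    (hconv : Convex ℝ Ω) {v : EuclideanSpace ℝ (Fin n) → ℝ} (hv : ContDiff ℝ 1 v) {D t : ℝ} (ht : 0 < t) (ht2 : t ≤ 1 / 2)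
    (hD : ∀ x ∈ Ω, ∀ y ∈ Ω, ‖y - x‖ ≤ D) (y : EuclideanSpace ℝ (Fin n)) (hy : y ∈ Ω) :
    ∫ x in Ω, (v (x + t • (y - x)) - v x) ^ 2 ≤
      t ^ 2 * D ^ 2 * (2 ^ n * ∫ x in Ω, ‖fderiv ℝ v x‖ ^ 2) := by
  have hfd : Continuous (fderiv ℝ v) := hv.continuous_fderiv one_ne_zero
  have hvc := hv.continuous
  have hG : Continuous fun x => ‖fderiv ℝ v x‖ ^ 2 := by fun_prop
  set G := fun x => ‖fderiv ℝ v x‖ ^ 2 with hGdef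
  have hunc : Continuous (Function.uncurry fun (x : EuclideanSpace ℝ (Fin n)) (s : ℝ) => G (x + (s * t) • (y - x))) := by
    unfold Function.uncurry
    exact hG.comp (by fun_prop)
  have hint := aux_swap (volume : Measure (EuclideanSpace ℝ (Fin n))) (volume : Measure ℝ) hbd
    (Metric.isBounded_Ioc (0:ℝ) 1) hunc
  calc ∫ x in Ω, (v (x + t • (y - x)) - v x) ^ 2
      ≤ ∫ x in Ω, t ^ 2 * D ^ 2 * ∫ s in Set.Ioc (0:ℝ) 1, G (x + (s * t) • (y - x)) := by
        apply setIntegral_mono_on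
        · exact aux_integrableOn volume hbd (by fun_prop)
        · exact hint.integral_prod_left.const_mul _
        · exact hop.measurableSet
        · intro x hx
          have := aux_diff hv (t := t) x y (hD x hx y hy)
          rwa [intervalIntegral.integral_of_le zero_le_one] at this
    _ = t ^ 2 * D ^ 2 * ∫ s in Set.Ioc (0:ℝ) 1, ∫ x in Ω, G (x + (s * t) • (y - x)) := by
        rw [integral_const_mul, integral_integral_swap hint]
    _ ≤ t ^ 2 * D ^ 2 * ∫ s in Set.Ioc (0:ℝ) 1, (2 ^ n * ∫ x in Ω, G x) := by
        refine mul_le_mul_of_nonneg_left ?_ (by positivity)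
        apply setIntegral_mono_on
        · exact hint.integral_prod_right
        · exact aux_integrableOn volume (Metric.isBounded_Ioc (0:ℝ) 1) continuous_const
        · exact measurableSet_Ioc
        · intro s hs
          have h0 : 0 ≤ s * t := mul_nonneg hs.1.le ht.le
          have h1 : s * t ≤ 1 / 2 := by nlinarith [hs.2]
          have hnn : 0 ≤ ∫ x in Ω, G x := integral_nonneg fun x => by positivity
          have heq : ∀ x : EuclideanSpace ℝ (Fin n), x + (s * t) • (y - x) = (1 - s * t) • x + (s * t) • y := by
            intro x; module
          simp only [heq]
          refine (aux_cv hbd hop hG (fun x => by positivity) (a := 1 - s * t) (by linarith) _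
            (fun x hx => hconv hx hy (by linarith) h0 (by ring))).trans ?_
          refine mul_le_mul_of_nonneg_right ?_ hnn
          rw [← inv_pow]
          have : (1 - s * t)⁻¹ ≤ 2 := by
            rw [inv_le_comm₀ (by linarith) (by norm_num)]; linarith
          have h3 : 0 ≤ (1 - s * t)⁻¹ := inv_nonneg.2 (by linarith)
          gcongr
    _ = _ := by simp

lemma aux_pt {V a b m γ : ℝ} (hV : 0 ≤ V) (ha : 0 ≤ a) (hb : 0 ≤ b) (hm : 0 < m) (hγ : 1 ≤ γ)
    (h : 0 < V → m ≤ 2 ^ (2 / γ) * a / V ^ (2 / γ) + 4 * b / V ^ 2) :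
    V ^ 2 ≤ (2 * 2 ^ (2 / γ) / m * a) ^ γ + 8 / m * b := by
  have hA : 0 ≤ (2 * 2 ^ (2 / γ) / m * a) ^ γ := by positivity
  have hB : 0 ≤ 8 / m * b := by positivity
  rcases hV.eq_or_lt with h0 | h0
  · rw [← h0]; simpa using add_nonneg hA hB
  have h := h h0
  have hVp : 0 < V ^ (2 / γ) := by positivity
  by_cases hc : m / 2 ≤ 4 * b / V ^ 2
  · rw [div_le_div_iff₀ (by norm_num) (by positivity)] at hc
    have : V ^ 2 ≤ 8 / m * b := by
      rw [div_mul_eq_mul_div, le_div_iff₀ hm]; linarith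
    linarith
  · have hc' : m / 2 ≤ 2 ^ (2 / γ) * a / V ^ (2 / γ) := by linarith
    rw [div_le_div_iff₀ (by norm_num) (by positivity)] at hc'
    have h1 : V ^ (2 / γ) ≤ 2 * 2 ^ (2 / γ) / m * a := by
      rw [div_mul_eq_mul_div, le_div_iff₀ hm]; linarith
    have h2 := Real.rpow_le_rpow hVp.le h1 (by linarith : 0 ≤ γ)
    rw [← Real.rpow_mul hV, div_mul_cancel₀ _ (by linarith : γ ≠ 0)] at h2
    norm_num at h2
    linarith

lemma aux_one {V z p : ℝ} (hp : 0 < p) (hV : 0 < |V|) :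
    1 ≤ 2 ^ p / |V| ^ p * |z| ^ p + 4 / |V| ^ 2 * (z - V) ^ 2 := by
  have hA : 0 ≤ 2 ^ p / |V| ^ p * |z| ^ p := by positivity
  have hB : 0 ≤ 4 / |V| ^ 2 * (z - V) ^ 2 := by positivity
  by_cases hc : |V| ≤ 2 * |z|
  · have : 1 ≤ 2 ^ p / |V| ^ p * |z| ^ p := by
      rw [div_mul_eq_mul_div, one_le_div (by positivity), ← Real.mul_rpow (by norm_num) (abs_nonneg _)]
      exact Real.rpow_le_rpow hV.le hc hp.le
    linarith
  · have h1 : |V| ≤ 2 * |z - V| := by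
      have := abs_sub_abs_le_abs_sub V z
      rw [abs_sub_comm] at this
      linarith
    have : 1 ≤ 4 / |V| ^ 2 * (z - V) ^ 2 := by
      rw [div_mul_eq_mul_div, one_le_div (by positivity), ← sq_abs (z - V)]
      nlinarith
    linarith

end helpers

/-- Lemma 3.3, inequality (3.4): interpolation inequality
`‖v‖₂² ≤ ε ‖∇v‖₂² + M ‖|v|^(2/γ)‖₁^γ` on a bounded convex domain. -/
theorem stmt_0 (n : ℕ) (hn : 1 ≤ n) (Ω : Set (EuclideanSpace ℝ (Fin n)))
    (hne : Ω.Nonempty) (hbd : Bornology.IsBounded Ω) (hop : IsOpen Ω)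
    (hconv : Convex ℝ Ω) (γ : ℝ) (hγ : 1 ≤ γ) (ε : ℝ) (hε : 0 < ε) :
    ∃ M : ℝ, 0 < M ∧ ∀ v : EuclideanSpace ℝ (Fin n) → ℝ, ContDiff ℝ 1 v →
      (∫ x in Ω, (v x) ^ 2) ≤
        ε * (∫ x in Ω, ‖gradient v x‖ ^ 2) +
          M * (∫ x in Ω, |v x| ^ (2 / γ)) ^ γ := by
  obtain ⟨D0, hD0⟩ := Metric.isBounded_iff.1 hbd
  obtain ⟨D, hDpos, hD⟩ : ∃ D : ℝ, 0 < D ∧ ∀ x ∈ Ω, ∀ y ∈ Ω, ‖y - x‖ ≤ D := by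
    refine ⟨max D0 1, by positivity, fun x hx y hy => ?_⟩
    rw [← dist_eq_norm]
    exact (hD0 hy hx).trans (le_max_left _ _)
  have hfin : volume Ω < ⊤ := hbd.measure_lt_top
  set m := volume.real Ω with hmdef
  have hm : 0 < m := ENNReal.toReal_pos (hop.measure_pos volume hne).ne' hfin.ne
  obtain ⟨t, ht, ht2, htε⟩ : ∃ t : ℝ, 0 < t ∧ t ≤ 1 / 2 ∧ 8 * (t ^ 2 * D ^ 2 * 2 ^ n) ≤ ε := by
    refine ⟨min (1 / 2) (ε / (8 * D ^ 2 * 2 ^ n)), by positivity, min_le_left _ _, ?_⟩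
    set t := min (1 / 2) (ε / (8 * D ^ 2 * 2 ^ n)) with htd
    have h0 : 0 < t := by positivity
    have h1 : t ≤ 1 / 2 := min_le_left _ _
    have h2 : t ≤ ε / (8 * D ^ 2 * 2 ^ n) := min_le_right _ _
    rw [le_div_iff₀ (by positivity)] at h2
    have h3 : t ^ 2 ≤ t := by nlinarith
    calc 8 * (t ^ 2 * D ^ 2 * 2 ^ n) ≤ 8 * (t * D ^ 2 * 2 ^ n) := by gcongr
      _ ≤ ε := by linarith
  have hγ0 : 0 < γ := by linarith
  have hp : 0 < 2 / γ := by positivity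
  refine ⟨m * (2 * 2 ^ (2 / γ) / m * (t ^ n)⁻¹) ^ γ, by positivity, fun v hv => ?_⟩
  have hvc := hv.continuous
  have hgrad : ∀ x, ‖gradient v x‖ = ‖fderiv ℝ v x‖ := fun x => by
    simp [gradient]
  simp only [hgrad]
  set A := ∫ x in Ω, |v x| ^ (2 / γ) with hA
  set Gi := ∫ x in Ω, ‖fderiv ℝ v x‖ ^ 2 with hGi
  have hA0 : 0 ≤ A := integral_nonneg fun x => by positivity
  have hpc : Continuous fun x => |v x| ^ (2 / γ) :=
    hvc.abs.rpow_const fun x => Or.inr hp.le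
  have hunc : Continuous (Function.uncurry fun (x y : EuclideanSpace ℝ (Fin n)) =>
      (v (x + t • (y - x)) - v x) ^ 2) := by
    unfold Function.uncurry
    fun_prop
  have hint := aux_swap (volume : Measure (EuclideanSpace ℝ (Fin n)))
    (volume : Measure (EuclideanSpace ℝ (Fin n))) hbd hbd hunc
  have hpoint : ∀ x ∈ Ω, v x ^ 2 ≤ (2 * 2 ^ (2 / γ) / m * (t ^ n)⁻¹) ^ γ * A ^ γ +
      8 / m * ∫ y in Ω, (v (x + t • (y - x)) - v x) ^ 2 := by
    intro x hx
    have hcomp : Continuous fun y => |v (x + t • (y - x))| ^ (2 / γ) :=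
      hpc.comp (g := fun x => |v x| ^ (2 / γ)) (f := fun y => x + t • (y - x)) (by fun_prop)
    have ha : ∫ y in Ω, |v (x + t • (y - x))| ^ (2 / γ) ≤ (t ^ n)⁻¹ * A := by
      have heq : ∀ y, x + t • (y - x) = t • y + (1 - t) • x := by intro y; module
      simp only [heq]
      exact aux_cv hbd hop hpc (fun x => by positivity) ht _
        (fun y hy => hconv hy hx ht.le (by linarith) (by ring))
    have key := aux_pt (V := |v x|) (a := (t ^ n)⁻¹ * A)
      (b := ∫ y in Ω, (v (x + t • (y - x)) - v x) ^ 2) (abs_nonneg _) (by positivity)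
      (integral_nonneg fun y => by positivity) hm hγ ?_
    · rw [sq_abs, ← mul_assoc, Real.mul_rpow (by positivity) hA0] at key
      exact key
    · intro hV
      have i1 : IntegrableOn (fun y => 2 ^ (2 / γ) / |v x| ^ (2 / γ) *
          |v (x + t • (y - x))| ^ (2 / γ)) Ω :=
        aux_integrableOn volume hbd (hcomp.const_mul _)
      have i2 : IntegrableOn (fun y => 4 / |v x| ^ 2 * (v (x + t • (y - x)) - v x) ^ 2) Ω :=
        aux_integrableOn volume hbd (by fun_prop)
      have h1 : ∫ y in Ω, (1 : ℝ) ≤ ∫ y in Ω, (2 ^ (2 / γ) / |v x| ^ (2 / γ) *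
          |v (x + t • (y - x))| ^ (2 / γ) + 4 / |v x| ^ 2 * (v (x + t • (y - x)) - v x) ^ 2) := by
        refine integral_mono ?_ (i1.add i2) fun y => aux_one hp hV
        exact aux_integrableOn volume hbd continuous_const
      rw [integral_add i1 i2, integral_const_mul, integral_const_mul] at h1
      simp only [integral_const, smul_eq_mul, mul_one, measureReal_restrict_apply_univ] at h1
      rw [← hmdef] at h1
      refine h1.trans ?_
      rw [mul_div_right_comm, mul_div_right_comm]
      gcongr
  have hb2 : ∫ x in Ω, ∫ y in Ω, (v (x + t • (y - x)) - v x) ^ 2 ≤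
      m * (t ^ 2 * D ^ 2 * (2 ^ n * Gi)) := by
    rw [integral_integral_swap hint]
    have : ∫ y in Ω, (t ^ 2 * D ^ 2 * (2 ^ n * Gi)) = m * (t ^ 2 * D ^ 2 * (2 ^ n * Gi)) := by
      simp [hmdef]
    rw [← this]
    apply setIntegral_mono_on hint.integral_prod_right
      (aux_integrableOn volume hbd continuous_const) hop.measurableSet
    intro y hy
    exact aux_b hbd hop hconv hv ht ht2 hD y hy
  have hGi0 : 0 ≤ Gi := integral_nonneg fun x => by positivity
  calc ∫ x in Ω, v x ^ 2 ≤ ∫ x in Ω, ((2 * 2 ^ (2 / γ) / m * (t ^ n)⁻¹) ^ γ * A ^ γ +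
      8 / m * ∫ y in Ω, (v (x + t • (y - x)) - v x) ^ 2) := by
        apply setIntegral_mono_on (aux_integrableOn volume hbd (by fun_prop)) _
          hop.measurableSet hpoint
        exact (aux_integrableOn volume hbd continuous_const).add
          (hint.integral_prod_left.const_mul _)
    _ = m * ((2 * 2 ^ (2 / γ) / m * (t ^ n)⁻¹) ^ γ * A ^ γ) +
      8 / m * ∫ x in Ω, ∫ y in Ω, (v (x + t • (y - x)) - v x) ^ 2 := by
        have hl : IntegrableOn (fun x => 8 / m * ∫ y in Ω, (v (x + t • (y - x)) - v x) ^ 2) Ω :=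
          hint.integral_prod_left.const_mul _
        rw [integral_add (aux_integrableOn volume hbd continuous_const) hl, integral_const,
          integral_const_mul, measureReal_restrict_apply_univ, smul_eq_mul]
    _ ≤ m * ((2 * 2 ^ (2 / γ) / m * (t ^ n)⁻¹) ^ γ * A ^ γ) +
      8 / m * (m * (t ^ 2 * D ^ 2 * (2 ^ n * Gi))) := by gcongr
    _ = 8 * (t ^ 2 * D ^ 2 * 2 ^ n) * Gi +
      m * (2 * 2 ^ (2 / γ) / m * (t ^ n)⁻¹) ^ γ * A ^ γ := by
        field_simp
        ring
    _ ≤ _ := by gcongr
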